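/- For any n ≥ 2, every optimal set α_n of n-means for P satisfies α_n ∩ J₁ ≠ ∅ and α_n ∩ J₂ ≠ ∅, where J₁ = [0, 1/4] and J₂ = [1/2, 1]. -/

import Mathlib

open MeasureTheory Set
open scoped ENNReal Classical

noncomputable section

/-- The similarity map `S₁(x) = x/4`. -/
def S1 (x : ℝ) : ℝ := x / 4

/-- The similarity map `S₂(x) = x/2 + 1/2`. -/
def S2 (x : ℝ) : ℝ := x / 2 + 1 / 2

/-- `P` satisfies the self-similarity relation `P = (1/4)·P∘S₁⁻¹ + (3/4)·P∘S₂⁻¹`. -/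
def SelfSimilar (P : Measure ℝ) : Prop :=
  P = (1/4 : ℝ≥0∞) • P.map S1 + (3/4 : ℝ≥0∞) • P.map S2

/-- For a word `σ` over `{1,2}` (encoded as `Fin 2`, `0 ↦ S₁`, `1 ↦ S₂`),
the composition `S_σ = S_{σ₁} ∘ ⋯ ∘ S_{σ_k}`. -/
def Sw : List (Fin 2) → ℝ → ℝ
  | [] => id
  | i :: σ => (if i = 0 then S1 else S2) ∘ Sw σ

/-- `p_σ`, the product of the probabilities `p₁ = 1/4`, `p₂ = 3/4` along `σ`. -/
def pw : List (Fin 2) → ℝ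
  | [] => 1
  | i :: σ => (if i = 0 then (1:ℝ)/4 else 3/4) * pw σ

/-- `s_σ`, the product of the contraction ratios `s₁ = 1/4`, `s₂ = 1/2` along `σ`. -/
def sw : List (Fin 2) → ℝ
  | [] => 1
  | i :: σ => (if i = 0 then (1:ℝ)/4 else 1/2) * sw σ

/-- `c(σ)`, the number of occurrences of the symbol `1` (encoded `0`) in `σ`. -/
def cnt (σ : List (Fin 2)) : ℕ := σ.count 0

/-- The cylinder interval `J_σ = S_σ([0,1])`. -/
def J (σ : List (Fin 2)) : Set ℝ := Sw σ '' Set.Icc 0 1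

/-- The distortion error `V(P;α) = ∫ min_{a ∈ α} (x-a)² dP`. -/
def distortion (P : Measure ℝ) (α : Finset ℝ) : ℝ :=
  ∫ x, sInf ((fun a => (x - a) ^ 2) '' (α : Set ℝ)) ∂P

/-- The `n`-th quantization error `V_n`. -/
def qError (P : Measure ℝ) (n : ℕ) : ℝ :=
  sInf {e | ∃ α : Finset ℝ, α.Nonempty ∧ α.card ≤ n ∧ e = distortion P α}

/-- `α` is an optimal set of `n`-means for `P`. -/
def IsOptimal (P : Measure ℝ) (n : ℕ) (α : Finset ℝ) : Prop :=
  α.Nonempty ∧ α.card ≤ n ∧ distortion P α = qError P n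

/-- `q_σ := P(J_σ) · λ(J_σ)²`. -/
def qnt (P : Measure ℝ) (σ : List (Fin 2)) : ℝ :=
  (P (J σ)).toReal * ((volume (J σ)).toReal) ^ 2

/-!
Replacing an optimal set by its projection onto `[0, 1]` does not increase the distance to any point
of `[0, 1]`, hence by optimality the two distances agree on the support of `P`; that support
contains the fixed points `0` and `1` of `S₁` and `S₂`, so an optimal set with a point in `(-∞, 0]`
contains `0`, and one with a point in `[1, ∞)` contains `1`. It remains to find a point `≤ 1/4` and
a point `≥ 1/2`. The second exists because a set to the left of `1/2` does worse than `{1/6, 5/6}`.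

For the first, suppose that the least point `a` is `> 1/4`. If another point `b` had `a + b ≤ 1`,
then `a` would not be needed on `J₂`, and moving it to `1/6`, the conditional mean of `P` on `J₁`,
would lower the distortion; so all other points are `> 1 - a`. For `n ≥ 3` such a set does worse
than `{1/6, 7/12, 11/12}`. For `n = 2` the distortion of `{a, b}` is a quadratic polynomial minus
`2 (b - a) E[((a + b)/2 - X)⁺]`, and the self-similarity of `P` gives `E[(t - X)⁺] ≤ 3/8 t²`, which
suffices to show that `{a, b}` with `a + b > 1` does worse than `{1/6, 5/6}`.
-/

theorem infDist_map_le_of_lipschitzWith {X : Type*} [PseudoMetricSpace X] {f : X → X}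
    {K : NNReal} {s : Set X} {x : X} (hf : LipschitzWith K f) (hs : s.Nonempty)
    (hfs : MapsTo f s s) :
    Metric.infDist (f x) s ≤ K * Metric.infDist x s := by
  have hle : ∀ y ∈ s, Metric.infDist (f x) s ≤ K * dist x y := fun y hy =>
    (Metric.infDist_le_dist_of_mem (hfs hy)).trans (hf.dist_le_mul x y)
  rcases eq_zero_or_pos K with rfl | hK
  · obtain ⟨y, hy⟩ := hs
    simpa using hle y hy
  · rw [← div_le_iff₀' (NNReal.coe_pos.2 hK)]
    exact (Metric.le_infDist hs).2 fun {_} hy => (div_le_iff₀' (NNReal.coe_pos.2 hK)).2 (hle _ hy)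

theorem mem_of_isFixedPt_of_mapsTo {X : Type*} [MetricSpace X] [CompleteSpace X] {f : X → X}
    {K : NNReal} {s : Set X} {x : X} (hf : ContractingWith K f) (hs : IsClosed s) (hne : s.Nonempty)
    (hfs : MapsTo f s s) (hx : Function.IsFixedPt f x) : x ∈ s := by
  obtain ⟨y, hy⟩ := hne
  have : Nonempty X := ⟨y⟩
  rw [hf.fixedPoint_unique hx]
  exact hs.mem_of_tendsto (hf.tendsto_iterate_fixedPoint y)
    (.of_forall fun n => hfs.iterate n hy)

theorem mapsTo_support_of_quasiMeasurePreserving {X : Type*} [TopologicalSpace X]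
    [MeasurableSpace X] {μ : Measure X} {T : X → X} (hT : Measure.QuasiMeasurePreserving T μ μ)
    (hc : Continuous T) : MapsTo T μ.support μ.support := by
  intro x hx
  rw [Measure.mem_support_iff_forall] at hx ⊢
  refine fun U hU => pos_iff_ne_zero.2 fun h => ?_
  exact (hx _ (hc.continuousAt hU)).ne' (hT.preimage_null h)

theorem lipschitzWith_S1 : LipschitzWith (1 / 4) S1 :=
  .of_dist_le_mul fun x y => by
    simp only [S1, Real.dist_eq, ← sub_div, abs_div]
    norm_num
    linarith

theorem lipschitzWith_S2 : LipschitzWith (1 / 2) S2 :=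
  .of_dist_le_mul fun x y => by
    simp only [S2, Real.dist_eq, add_sub_add_right_eq_sub, ← sub_div, abs_div]
    norm_num
    linarith

theorem infDist_S1_le {s : Set ℝ} (hne : s.Nonempty) (hs1 : MapsTo S1 s s) (x : ℝ) :
    Metric.infDist (S1 x) s ≤ Metric.infDist x s / 2 := by
  have h := infDist_map_le_of_lipschitzWith (x := x) lipschitzWith_S1 hne hs1
  norm_num at h
  linarith [Metric.infDist_nonneg (x := x) (s := s)]

theorem infDist_S2_le {s : Set ℝ} (hne : s.Nonempty) (hs2 : MapsTo S2 s s) (x : ℝ) :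
    Metric.infDist (S2 x) s ≤ Metric.infDist x s / 2 := by
  have h := infDist_map_le_of_lipschitzWith (x := x) lipschitzWith_S2 hne hs2
  norm_num at h
  linarith

theorem continuous_S1 : Continuous S1 := lipschitzWith_S1.continuous

theorem continuous_S2 : Continuous S2 := lipschitzWith_S2.continuous

namespace SelfSimilar

section Invariance

variable {P : Measure ℝ} {E : Type*} [NormedAddCommGroup E] {f : ℝ → E}

theorem quasiMeasurePreserving_S1 (hP : SelfSimilar P) : Measure.QuasiMeasurePreserving S1 P P :=
  ⟨continuous_S1.measurable, .mk fun s _ h => by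
    rw [hP] at h
    simpa using (add_eq_zero.1 h).1⟩

theorem quasiMeasurePreserving_S2 (hP : SelfSimilar P) : Measure.QuasiMeasurePreserving S2 P P :=
  ⟨continuous_S2.measurable, .mk fun s _ h => by
    rw [hP] at h
    simpa using (add_eq_zero.1 h).2⟩

theorem integrable_map_S1 (hP : SelfSimilar P) (hf : Integrable f P) :
    Integrable f (P.map S1) := by
  rw [hP] at hf
  exact (integrable_smul_measure (by simp) (by finiteness)).1 hf.left_of_add_measure

theorem integrable_map_S2 (hP : SelfSimilar P) (hf : Integrable f P) :
    Integrable f (P.map S2) := by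
  rw [hP] at hf
  exact (integrable_smul_measure (by simp) (by finiteness)).1 hf.right_of_add_measure

theorem integral_eq [NormedSpace ℝ E] (hP : SelfSimilar P) (hf : Integrable f P) :
    ∫ x, f x ∂P = (1 / 4 : ℝ) • ∫ x, f (S1 x) ∂P + (3 / 4 : ℝ) • ∫ x, f (S2 x) ∂P := by
  have h1 := hP.integrable_map_S1 hf
  have h2 := hP.integrable_map_S2 hf
  conv_lhs => rw [hP]
  rw [integral_add_measure (h1.smul_measure (by finiteness)) (h2.smul_measure (by finiteness)),
    integral_smul_measure, integral_smul_measure,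
    integral_map continuous_S1.aemeasurable h1.aestronglyMeasurable,
    integral_map continuous_S2.aemeasurable h2.aestronglyMeasurable]
  simp [ENNReal.toReal_div]

end Invariance

section Support

variable {P : Measure ℝ} {s : Set ℝ}

/- Composing the distance to `s` with a bounded strictly increasing function makes it integrable,
so that the invariance of `P` can be tested against it without any moment assumption. -/
theorem ae_mem_of_mapsTo [IsFiniteMeasure P] (hP : SelfSimilar P) (hs : IsClosed s)
    (hne : s.Nonempty) (hs1 : MapsTo S1 s s) (hs2 : MapsTo S2 s s) : ∀ᵐ x ∂P, x ∈ s := by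
  set d : ℝ → ℝ := fun x => Metric.infDist x s
  have hd : Continuous d := Metric.continuous_infDist_pt s
  have hd0 : ∀ x, 0 ≤ d x := fun x => Metric.infDist_nonneg
  have hint : ∀ g : ℝ → ℝ, Continuous g → Integrable (fun x => Real.arctan (g x)) P :=
    fun g hg => .of_bound (by fun_prop) (Real.pi / 2) <| .of_forall fun x =>
      (abs_lt.2 ⟨Real.neg_pi_div_two_lt_arctan _, Real.arctan_lt_pi_div_two _⟩).le
  have hhalf_le : ∀ x, Real.arctan (d x / 2) ≤ Real.arctan (d x) := fun x =>
    Real.arctan_mono (by linarith [hd0 x])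
  have hle : ∫ x, Real.arctan (d x) ∂P ≤ ∫ x, Real.arctan (d x / 2) ∂P := by
    have h1 : ∫ x, Real.arctan (d (S1 x)) ∂P ≤ ∫ x, Real.arctan (d x / 2) ∂P :=
      integral_mono (hint _ (hd.comp continuous_S1)) (hint _ (by fun_prop))
        fun x => Real.arctan_mono (infDist_S1_le hne hs1 x)
    have h2 : ∫ x, Real.arctan (d (S2 x)) ∂P ≤ ∫ x, Real.arctan (d x / 2) ∂P :=
      integral_mono (hint _ (hd.comp continuous_S2)) (hint _ (by fun_prop))
        fun x => Real.arctan_mono (infDist_S2_le hne hs2 x)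
    rw [hP.integral_eq (hint d hd), smul_eq_mul, smul_eq_mul]
    linarith
  have heq : (fun x => Real.arctan (d x / 2)) =ᵐ[P] fun x => Real.arctan (d x) :=
    (integral_eq_iff_of_ae_le (hint _ (by fun_prop)) (hint d hd) (.of_forall hhalf_le)).1 <|
      (integral_mono (hint _ (by fun_prop)) (hint d hd) hhalf_le).antisymm hle
  filter_upwards [heq] with x hx
  rw [hs.mem_iff_infDist_zero hne]
  have : d x / 2 = d x := Real.arctan_injective hx
  change d x = 0
  linarith

theorem ae_mem_Icc [IsFiniteMeasure P] (hP : SelfSimilar P) : ∀ᵐ x ∂P, x ∈ Icc (0 : ℝ) 1 :=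
  hP.ae_mem_of_mapsTo isClosed_Icc ⟨0, by norm_num⟩
    (fun x hx => ⟨by unfold S1; linarith [hx.1], by unfold S1; linarith [hx.2]⟩)
    (fun x hx => ⟨by unfold S2; linarith [hx.1], by unfold S2; linarith [hx.2]⟩)

theorem integrable_of_continuous [IsFiniteMeasure P] (hP : SelfSimilar P) {f : ℝ → ℝ}
    (hf : Continuous f) : Integrable f P := by
  rw [← Measure.restrict_eq_self_of_ae_mem hP.ae_mem_Icc]
  exact hf.continuousOn.integrableOn_compact isCompact_Icc

theorem zero_mem_support (hP : SelfSimilar P) (hP0 : P ≠ 0) : (0 : ℝ) ∈ P.support :=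
  mem_of_isFixedPt_of_mapsTo ⟨by norm_num, lipschitzWith_S1⟩ Measure.isClosed_support
    (Measure.nonempty_support hP0)
    (mapsTo_support_of_quasiMeasurePreserving hP.quasiMeasurePreserving_S1 continuous_S1)
    (by norm_num [Function.IsFixedPt, S1])

theorem one_mem_support (hP : SelfSimilar P) (hP0 : P ≠ 0) : (1 : ℝ) ∈ P.support :=
  mem_of_isFixedPt_of_mapsTo ⟨by norm_num, lipschitzWith_S2⟩ Measure.isClosed_support
    (Measure.nonempty_support hP0)
    (mapsTo_support_of_quasiMeasurePreserving hP.quasiMeasurePreserving_S2 continuous_S2)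
    (by norm_num [Function.IsFixedPt, S2])

end Support

section Moments

variable {P : Measure ℝ}

theorem integral_eq_of_continuous [IsFiniteMeasure P] {f : ℝ → ℝ} (hP : SelfSimilar P)
    (hf : Continuous f) :
    ∫ x, f x ∂P = 1 / 4 * ∫ x, f (S1 x) ∂P + 3 / 4 * ∫ x, f (S2 x) ∂P := by
  simpa only [smul_eq_mul] using hP.integral_eq (hP.integrable_of_continuous hf)

variable [IsProbabilityMeasure P]

theorem integral_quadratic (hP : SelfSimilar P) (u v w : ℝ) :
    ∫ x, (u * x ^ 2 + v * x + w) ∂P = u * ∫ x, x ^ 2 ∂P + v * ∫ x, x ∂P + w := by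
  have h2 : Integrable (fun x : ℝ => u * x ^ 2) P := hP.integrable_of_continuous (by fun_prop)
  have h1 : Integrable (fun x : ℝ => v * x) P := hP.integrable_of_continuous (by fun_prop)
  have h21 : Integrable (fun x : ℝ => u * x ^ 2 + v * x) P := h2.add h1
  rw [integral_add h21 (integrable_const w), integral_add h2 h1, integral_const_mul,
    integral_const_mul, integral_const, probReal_univ, one_smul]

theorem integral_id (hP : SelfSimilar P) : ∫ x, x ∂P = 2 / 3 := by
  have hS1 : ∫ x, S1 x ∂P = 1 / 4 * ∫ x, x ∂P := by
    simpa [S1, div_eq_inv_mul] using hP.integral_quadratic 0 (1 / 4) 0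
  have hS2 : ∫ x, S2 x ∂P = 1 / 2 * ∫ x, x ∂P + 1 / 2 := by
    simpa [S2, div_eq_inv_mul] using hP.integral_quadratic 0 (1 / 2) (1 / 2)
  linarith [hP.integral_eq_of_continuous continuous_id']

theorem integral_sq (hP : SelfSimilar P) : ∫ x, x ^ 2 ∂P = 28 / 51 := by
  have hS1 : ∫ x, S1 x ^ 2 ∂P = 1 / 16 * ∫ x, x ^ 2 ∂P := by
    rw [← integral_const_mul]
    exact integral_congr_ae (.of_forall fun x => by simp only [S1]; ring)
  have hS2 : ∫ x, S2 x ^ 2 ∂P = 1 / 4 * ∫ x, x ^ 2 ∂P + 1 / 2 * ∫ x, x ∂P + 1 / 4 := by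
    rw [← hP.integral_quadratic]
    exact integral_congr_ae (.of_forall fun x => by simp only [S2]; ring)
  linarith [hP.integral_id, hP.integral_eq_of_continuous (continuous_pow 2)]

theorem integral_affine_sub_sq (hP : SelfSimilar P) (s t c : ℝ) :
    ∫ x, (s * x + t - c) ^ 2 ∂P = s ^ 2 * (16 / 153) + (s * (2 / 3) + t - c) ^ 2 := by
  have h := hP.integral_quadratic (s ^ 2) (2 * s * (t - c)) ((t - c) ^ 2)
  rw [hP.integral_id, hP.integral_sq] at h
  calc ∫ x, (s * x + t - c) ^ 2 ∂P
      = ∫ x, (s ^ 2 * x ^ 2 + 2 * s * (t - c) * x + (t - c) ^ 2) ∂P := by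
        congr 1 with x; ring
    _ = s ^ 2 * (16 / 153) + (s * (2 / 3) + t - c) ^ 2 := by rw [h]; ring

end Moments

end SelfSimilar

section Cylinders

theorem continuous_Sw (σ : List (Fin 2)) : Continuous (Sw σ) := by
  induction σ with
  | nil => exact continuous_id
  | cons i σ ih =>
    refine Continuous.comp ?_ ih
    split_ifs
    exacts [continuous_S1, continuous_S2]

theorem Sw_append (σ τ : List (Fin 2)) : Sw (σ ++ τ) = Sw σ ∘ Sw τ := by
  induction σ with
  | nil => rfl
  | cons i σ ih => simp only [List.cons_append, Sw, ih, Function.comp_assoc]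

theorem Sw_eq_affine (σ : List (Fin 2)) (x : ℝ) : Sw σ x = sw σ * x + Sw σ 0 := by
  induction σ with
  | nil => simp [Sw, sw]
  | cons i σ ih =>
    simp only [Sw, sw, Function.comp_apply]
    split_ifs <;> simp only [S1, S2] <;> rw [ih] <;> ring

theorem sw_pos (σ : List (Fin 2)) : 0 < sw σ := by
  induction σ with
  | nil => exact one_pos
  | cons i σ ih =>
    refine mul_pos ?_ ih
    split_ifs <;> norm_num

theorem J_eq_Icc (σ : List (Fin 2)) : J σ = Icc (Sw σ 0) (Sw σ 1) := by
  have h := image_affine_Icc' (sw_pos σ) (Sw σ 0) 0 1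
  rw [← Sw_eq_affine σ 0, ← Sw_eq_affine σ 1] at h
  rw [← h, J]
  exact image_congr fun x _ => Sw_eq_affine σ x

theorem J_zero : J [0] = Icc 0 (1 / 4) := by
  norm_num [J_eq_Icc, Sw, S1]

theorem J_one : J [1] = Icc (1 / 2) 1 := by
  norm_num [J_eq_Icc, Sw, S2]

theorem J_one_zero : J [1, 0] = Icc (1 / 2) (5 / 8) := by
  norm_num [J_eq_Icc, Sw, S1, S2]

theorem sw_zero : sw [0] = 1 / 4 := by norm_num [sw]

theorem sw_one : sw [1] = 1 / 2 := by norm_num [sw]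

theorem sw_one_zero : sw [1, 0] = 1 / 8 := by norm_num [sw]

theorem sw_one_one : sw [1, 1] = 1 / 4 := by norm_num [sw]

theorem Sw_zero_two_thirds : Sw [0] (2 / 3) = 1 / 6 := by norm_num [Sw, S1, S2]

theorem Sw_one_two_thirds : Sw [1] (2 / 3) = 5 / 6 := by norm_num [Sw, S1, S2]

theorem Sw_one_zero_two_thirds : Sw [1, 0] (2 / 3) = 7 / 12 := by norm_num [Sw, S1, S2]

theorem Sw_one_one_two_thirds : Sw [1, 1] (2 / 3) = 11 / 12 := by norm_num [Sw, S1, S2]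

end Cylinders

section CylinderIntegrals

variable {P : Measure ℝ} [IsFiniteMeasure P] {f g : ℝ → ℝ}

theorem SelfSimilar.integral_comp_Sw_eq (hP : SelfSimilar P) (hf : Continuous f)
    (σ : List (Fin 2)) :
    ∫ x, f (Sw σ x) ∂P =
      1 / 4 * ∫ x, f (Sw (σ ++ [0]) x) ∂P + 3 / 4 * ∫ x, f (Sw (σ ++ [1]) x) ∂P := by
  simp only [Sw_append]
  exact hP.integral_eq_of_continuous (hf.comp (continuous_Sw σ))

theorem SelfSimilar.integral_comp_Sw_mono (hP : SelfSimilar P) (hf : Continuous f)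
    (hg : Continuous g) {σ : List (Fin 2)} (h : ∀ y ∈ J σ, f y ≤ g y) :
    ∫ x, f (Sw σ x) ∂P ≤ ∫ x, g (Sw σ x) ∂P := by
  refine integral_mono_ae (hP.integrable_of_continuous (hf.comp (continuous_Sw σ)))
    (hP.integrable_of_continuous (hg.comp (continuous_Sw σ))) ?_
  filter_upwards [hP.ae_mem_Icc] with x hx using h _ (mem_image_of_mem _ hx)

end CylinderIntegrals

section SquaredDistance

variable {s : Set ℝ} {a b c x : ℝ}

theorem continuous_infDist_sq (s : Set ℝ) : Continuous fun x => Metric.infDist x s ^ 2 :=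
  (Metric.continuous_infDist_pt s).pow 2

theorem infDist_sq_le_of_mem (ha : a ∈ s) : Metric.infDist x s ^ 2 ≤ (x - a) ^ 2 := by
  rw [← sq_abs (x - a), ← Real.dist_eq]
  exact pow_le_pow_left₀ Metric.infDist_nonneg (Metric.infDist_le_dist_of_mem ha) 2

theorem le_infDist_sq (hs : s.Nonempty) (h : ∀ a ∈ s, c ≤ (x - a) ^ 2) :
    c ≤ Metric.infDist x s ^ 2 := by
  have hsqrt : √c ≤ Metric.infDist x s := (Metric.le_infDist hs).2 fun {a} ha =>
    Real.sqrt_le_iff.2 ⟨dist_nonneg, by simpa only [Real.dist_eq, sq_abs] using h a ha⟩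
  exact (Real.sqrt_le_iff.1 hsqrt).2

theorem sq_sub_right_le_of_add_le (hab : a ≤ b) (hx : a + b ≤ 2 * x) :
    (x - b) ^ 2 ≤ (x - a) ^ 2 := by
  nlinarith

theorem sq_sub_left_le_of_le_add (hab : a ≤ b) (hx : 2 * x ≤ a + b) :
    (x - a) ^ 2 ≤ (x - b) ^ 2 := by
  nlinarith

theorem infDist_pair_sq (hab : a ≤ b) :
    Metric.infDist x {a, b} ^ 2 = (x - b) ^ 2 - 2 * (b - a) * max ((a + b) / 2 - x) 0 := by
  have ha : Metric.infDist x {a, b} ^ 2 ≤ (x - a) ^ 2 := infDist_sq_le_of_mem (mem_insert a {b})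
  have hb : Metric.infDist x {a, b} ^ 2 ≤ (x - b) ^ 2 := infDist_sq_le_of_mem (by simp)
  rcases le_total (2 * x) (a + b) with hx | hx
  · rw [max_eq_left (by linarith)]
    have hxa : (x - a) ^ 2 ≤ Metric.infDist x {a, b} ^ 2 := le_infDist_sq (by simp) <| by
      simp [sq_sub_left_le_of_le_add hab hx]
    linarith
  · rw [max_eq_right (by linarith)]
    have hxb : (x - b) ^ 2 ≤ Metric.infDist x {a, b} ^ 2 := le_infDist_sq (by simp) <| by
      simp [sq_sub_right_le_of_add_le hab hx]
    linarith

theorem abs_sub_projIcc_le (h : a ≤ b) (hx : x ∈ Icc a b) (c : ℝ) :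
    |x - projIcc a b h c| ≤ |x - c| := by
  simpa [projIcc_of_mem h hx, Subtype.dist_eq, Real.dist_eq] using
    (LipschitzWith.projIcc h).dist_le_mul x c

end SquaredDistance

namespace SelfSimilar

variable {P : Measure ℝ} [IsProbabilityMeasure P] {s : Set ℝ} {σ : List (Fin 2)}

theorem integral_Sw_sub_sq (hP : SelfSimilar P) (σ : List (Fin 2)) (c : ℝ) :
    ∫ x, (Sw σ x - c) ^ 2 ∂P = sw σ ^ 2 * (16 / 153) + (Sw σ (2 / 3) - c) ^ 2 := by
  rw [Sw_eq_affine σ (2 / 3), ← hP.integral_affine_sub_sq]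
  simp only [← Sw_eq_affine]

theorem integral_infDist_sq_le_of_mem {a : ℝ} (hP : SelfSimilar P) (ha : a ∈ s)
    (σ : List (Fin 2)) :
    ∫ x, Metric.infDist (Sw σ x) s ^ 2 ∂P ≤
      sw σ ^ 2 * (16 / 153) + (Sw σ (2 / 3) - a) ^ 2 := by
  rw [← hP.integral_Sw_sub_sq]
  exact hP.integral_comp_Sw_mono (g := fun y => (y - a) ^ 2) (continuous_infDist_sq s)
    (by fun_prop) fun _ _ => infDist_sq_le_of_mem ha

theorem le_integral_infDist_sq {c : ℝ} (hP : SelfSimilar P) (hs : s.Nonempty)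
    (h : ∀ y ∈ J σ, ∀ a ∈ s, (y - c) ^ 2 ≤ (y - a) ^ 2) :
    sw σ ^ 2 * (16 / 153) + (Sw σ (2 / 3) - c) ^ 2 ≤
      ∫ x, Metric.infDist (Sw σ x) s ^ 2 ∂P := by
  rw [← hP.integral_Sw_sub_sq]
  exact hP.integral_comp_Sw_mono (f := fun y => (y - c) ^ 2) (by fun_prop)
    (continuous_infDist_sq s) fun y hy => le_infDist_sq hs (h y hy)

end SelfSimilar

section Distortion

variable {P : Measure ℝ} {α β : Finset ℝ}

theorem distortion_eq_integral_infDist_sq (P : Measure ℝ) (α : Finset ℝ) :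
    distortion P α = ∫ x, Metric.infDist x α ^ 2 ∂P := by
  refine integral_congr_ae (.of_forall fun x => ?_)
  rcases (α : Set ℝ).eq_empty_or_nonempty with hα | hα
  · simp [hα]
  · obtain ⟨a, ha, hxa⟩ := α.finite_toSet.isCompact.exists_infDist_eq_dist hα x
    refine IsLeast.csInf_eq ⟨⟨a, ha, ?_⟩, ?_⟩
    · simp only [hxa, Real.dist_eq, sq_abs]
    · rintro _ ⟨b, hb, rfl⟩
      exact infDist_sq_le_of_mem hb

theorem distortion_nonneg (P : Measure ℝ) (α : Finset ℝ) : 0 ≤ distortion P α := by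
  rw [distortion_eq_integral_infDist_sq]
  exact integral_nonneg fun x => sq_nonneg _

variable [IsFiniteMeasure P]

theorem SelfSimilar.distortion_eq_add (hP : SelfSimilar P) (α : Finset ℝ) :
    distortion P α = 1 / 4 * ∫ x, Metric.infDist (Sw [0] x) α ^ 2 ∂P +
      3 / 4 * ∫ x, Metric.infDist (Sw [1] x) α ^ 2 ∂P := by
  rw [distortion_eq_integral_infDist_sq]
  exact hP.integral_comp_Sw_eq (continuous_infDist_sq α) []

theorem SelfSimilar.distortion_anti (hP : SelfSimilar P) (hα : α.Nonempty) (h : α ⊆ β) :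
    distortion P β ≤ distortion P α := by
  simp only [distortion_eq_integral_infDist_sq]
  exact integral_mono (hP.integrable_of_continuous (continuous_infDist_sq _))
    (hP.integrable_of_continuous (continuous_infDist_sq _)) fun x =>
      pow_le_pow_left₀ Metric.infDist_nonneg
        (Metric.infDist_le_infDist_of_subset (Finset.coe_subset.2 h) (by simpa using hα)) 2

end Distortion

/-- The lower partial moment `E[(t - X)⁺]` of a random variable `X` with law `P`, which determines
the distortion of two-point sets. -/
def shortfall (P : Measure ℝ) (t : ℝ) : ℝ := ∫ x, max (t - x) 0 ∂P

namespace SelfSimilar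

variable {P : Measure ℝ} {a b t : ℝ}

theorem shortfall_eq [IsFiniteMeasure P] (hP : SelfSimilar P) (t : ℝ) :
    shortfall P t = 1 / 16 * shortfall P (4 * t) + 3 / 8 * shortfall P (2 * t - 1) := by
  have hS1 : ∫ x, max (t - S1 x) 0 ∂P = 1 / 4 * shortfall P (4 * t) := by
    rw [shortfall, ← integral_const_mul]
    congr 1 with x
    rw [mul_max_of_nonneg _ _ (by norm_num), S1]
    ring_nf
  have hS2 : ∫ x, max (t - S2 x) 0 ∂P = 1 / 2 * shortfall P (2 * t - 1) := by
    rw [shortfall, ← integral_const_mul]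
    congr 1 with x
    rw [mul_max_of_nonneg _ _ (by norm_num), S2]
    ring_nf
  have h := hP.integral_eq_of_continuous (f := fun x => max (t - x) 0) (by fun_prop)
  rw [hS1, hS2] at h
  rw [shortfall, h]
  ring

theorem shortfall_of_nonpos [IsFiniteMeasure P] (hP : SelfSimilar P) (ht : t ≤ 0) :
    shortfall P t = 0 := by
  refine integral_eq_zero_of_ae ?_
  filter_upwards [hP.ae_mem_Icc] with x hx
  exact max_eq_right (by linarith [hx.1])

variable [IsProbabilityMeasure P]

theorem shortfall_of_one_le (hP : SelfSimilar P) (ht : 1 ≤ t) : shortfall P t = t - 2 / 3 := by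
  have hmax : ∀ᵐ x ∂P, max (t - x) 0 = t - x := by
    filter_upwards [hP.ae_mem_Icc] with x hx
    exact max_eq_left (by linarith [hx.2])
  rw [shortfall, integral_congr_ae hmax, integral_sub (integrable_const t)
    (hP.integrable_of_continuous continuous_id'), hP.integral_id, integral_const, probReal_univ,
    one_smul]

theorem shortfall_le_self (hP : SelfSimilar P) (ht : 0 ≤ t) : shortfall P t ≤ t := by
  calc shortfall P t ≤ ∫ _, t ∂P := by
        refine integral_mono_ae (hP.integrable_of_continuous (by fun_prop)) (integrable_const t) ?_
        filter_upwards [hP.ae_mem_Icc] with x hx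
        exact max_le (by linarith [hx.1]) ht
    _ = t := by rw [integral_const, probReal_univ, one_smul]

/- The recursion `shortfall_eq` preserves the bound `3 / 8 * t ^ 2 + ε` and shrinks `ε` by the
factor `3 / 8`. -/
theorem shortfall_le (hP : SelfSimilar P) (ht : 0 ≤ t) : shortfall P t ≤ 3 / 8 * t ^ 2 := by
  have happrox : ∀ k : ℕ, ∀ t : ℝ, 0 ≤ t → shortfall P t ≤ 3 / 8 * t ^ 2 + (3 / 8) ^ k := by
    intro k
    induction k with
    | zero => intro t ht; nlinarith [hP.shortfall_le_self ht, sq_nonneg (t - 4 / 3)]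
    | succ k ih =>
      intro t ht
      have hk : (0 : ℝ) < (3 / 8) ^ k := by positivity
      rw [pow_succ (3 / 8 : ℝ) k]
      rcases le_total t (1 / 2) with hhalf | hhalf
      · have h4 := ih (4 * t) (by linarith)
        rw [hP.shortfall_eq, hP.shortfall_of_nonpos (t := 2 * t - 1) (by linarith)]
        linarith
      rcases le_total t 1 with hone | hone
      · have h2 := ih (2 * t - 1) (by linarith)
        rw [hP.shortfall_eq, hP.shortfall_of_one_le (t := 4 * t) (by linarith)]
        nlinarith [mul_nonneg (sub_nonneg.2 hhalf) (sub_nonneg.2 hone)]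
      · rw [hP.shortfall_of_one_le hone]
        nlinarith [sq_nonneg (t - 4 / 3)]
  refine ge_of_tendsto' (?_ : Filter.Tendsto _ Filter.atTop _) fun k => happrox k t ht
  simpa using (tendsto_pow_atTop_nhds_zero_of_lt_one (r := (3 / 8 : ℝ)) (by norm_num)
    (by norm_num)).const_add (3 / 8 * t ^ 2)

theorem distortion_pair (hP : SelfSimilar P) (hab : a ≤ b) :
    distortion P {a, b} =
      16 / 153 + (2 / 3 - b) ^ 2 - 2 * (b - a) * shortfall P ((a + b) / 2) := by
  rw [distortion_eq_integral_infDist_sq, Finset.coe_pair]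
  simp only [infDist_pair_sq hab]
  rw [integral_sub (hP.integrable_of_continuous (by fun_prop))
    (hP.integrable_of_continuous (by fun_prop)), integral_const_mul, ← shortfall]
  simpa [Sw, sw] using hP.integral_Sw_sub_sq [] b

theorem distortion_one_sixth_five_sixths (hP : SelfSimilar P) :
    distortion P {1 / 6, 5 / 6} = 13 / 612 := by
  have hhalf : shortfall P (1 / 2) = 1 / 12 := by
    rw [hP.shortfall_eq, hP.shortfall_of_one_le (by norm_num), hP.shortfall_of_nonpos (by norm_num)]
    norm_num
  rw [hP.distortion_pair (by norm_num), show ((1 / 6 + 5 / 6) / 2 : ℝ) = 1 / 2 by norm_num, hhalf]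
  norm_num

theorem lt_distortion_pair (hP : SelfSimilar P) (hab : a ≤ b) (h : 1 < a + b) :
    13 / 612 < distortion P {a, b} := by
  rw [hP.distortion_pair hab]
  rcases le_total (a + b) 2 with h2 | h2
  · have hrec : shortfall P ((a + b) / 2) =
        1 / 16 * (2 * (a + b) - 2 / 3) + 3 / 8 * shortfall P (a + b - 1) := by
      rw [hP.shortfall_eq, hP.shortfall_of_one_le (by linarith)]
      ring_nf
    have hle : shortfall P (a + b - 1) ≤ 3 / 8 * (a + b - 1) ^ 2 := hP.shortfall_le (by linarith)
    have hmul := mul_le_mul_of_nonneg_left hle (sub_nonneg.2 hab)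
    have hcubic : 0 < (a + b - 1) ^ 3 * (1 - 9 / 16 * (a + b - 1)) :=
      mul_pos (pow_pos (by linarith) 3) (by linarith)
    -- For fixed `a + b`, complete the square in `b`.
    have hpos : 0 < (a - 1 / 6) ^ 2 + 3 * (b - 5 / 6) ^ 2 - 9 / 8 * (b - a) * (a + b - 1) ^ 2 :=
      calc 0 < (2 * (b - 5 / 6) - (a + b - 1) / 2 - 9 / 16 * (a + b - 1) ^ 2) ^ 2 +
            9 / 16 * ((a + b - 1) ^ 3 * (1 - 9 / 16 * (a + b - 1))) :=
          add_pos_of_nonneg_of_pos (sq_nonneg _) (mul_pos (by norm_num) hcubic)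
        _ = (a - 1 / 6) ^ 2 + 3 * (b - 5 / 6) ^ 2 - 9 / 8 * (b - a) * (a + b - 1) ^ 2 := by ring
    rw [hrec]
    linarith
  · rw [hP.shortfall_of_one_le (by linarith)]
    nlinarith [sq_nonneg (a - 2 / 3)]

variable {α : Finset ℝ}

theorem le_integral_infDist_sq_of_quarter_lt (hP : SelfSimilar P) (ha : IsLeast (α : Set ℝ) a)
    (ha4 : 1 / 4 < a) :
    1 / 153 + (1 / 6 - a) ^ 2 ≤ ∫ x, Metric.infDist (Sw [0] x) α ^ 2 ∂P := by
  have h := hP.le_integral_infDist_sq (σ := [0]) ⟨a, ha.1⟩ (c := a) fun y hy c hc => by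
    rw [J_zero] at hy
    exact sq_sub_left_le_of_le_add (ha.2 hc) (by linarith [hy.2, ha.2 hc])
  rw [sw_zero, Sw_zero_two_thirds] at h
  linarith

theorem distortion_insert_erase_lt (hP : SelfSimilar P) (ha : IsLeast (α : Set ℝ) a)
    (ha4 : 1 / 4 < a) (hb : b ∈ α) (hba : b ≠ a) (hab : a + b ≤ 1) :
    distortion P (insert (1 / 6) (α.erase a)) < distortion P α := by
  have hleft : ∫ x, Metric.infDist (Sw [0] x) (insert (1 / 6) (α.erase a) : Finset ℝ) ^ 2 ∂P ≤
      1 / 153 := by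
    have h := hP.integral_infDist_sq_le_of_mem
      (Finset.mem_coe.2 (Finset.mem_insert_self (1 / 6) (α.erase a))) [0]
    rw [sw_zero, Sw_zero_two_thirds] at h
    linarith
  have hright : ∫ x, Metric.infDist (Sw [1] x) (insert (1 / 6) (α.erase a) : Finset ℝ) ^ 2 ∂P ≤
      ∫ x, Metric.infDist (Sw [1] x) α ^ 2 ∂P := by
    refine hP.integral_comp_Sw_mono (continuous_infDist_sq _) (continuous_infDist_sq α)
      fun y hy => le_infDist_sq ⟨b, hb⟩ fun c hc => ?_
    rw [J_one] at hy
    have hmem : ∀ d ∈ α, d ≠ a →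
        Metric.infDist y (insert (1 / 6) (α.erase a) : Finset ℝ) ^ 2 ≤ (y - d) ^ 2 :=
      fun d hd hda => infDist_sq_le_of_mem <| Finset.mem_coe.2 <|
        Finset.mem_insert_of_mem <| Finset.mem_erase.2 ⟨hda, hd⟩
    by_cases hca : c = a
    · rw [hca]
      exact (hmem b hb hba).trans (sq_sub_right_le_of_add_le (ha.2 hb) (by linarith [hy.1]))
    · exact hmem c hc hca
  have hgain : 0 < (1 / 6 - a) ^ 2 := sq_pos_of_neg (by linarith)
  have hα := hP.le_integral_infDist_sq_of_quarter_lt ha ha4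
  rw [hP.distortion_eq_add, hP.distortion_eq_add]
  linarith

theorem lt_distortion_of_card_le_two (hP : SelfSimilar P) (hcard : α.card ≤ 2)
    (ha : IsLeast (α : Set ℝ) a) (h : ∀ b ∈ α, b ≠ a → 1 < a + b) :
    13 / 612 < distortion P α := by
  obtain ⟨b, hab, hlt, hsub⟩ : ∃ b, a ≤ b ∧ 1 < a + b ∧ α ⊆ {a, b} := by
    rcases (α.erase a).eq_empty_or_nonempty with hempty | ⟨b, hb⟩
    · rw [← Finset.insert_erase ha.1, hempty]
      exact ⟨max a (2 - a), le_max_left _ _, by linarith [le_max_right a (2 - a)], by simp⟩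
    · obtain ⟨hba, hbα⟩ := Finset.mem_erase.1 hb
      have hone : (α.erase a).card ≤ 1 := by rw [Finset.card_erase_of_mem ha.1]; omega
      refine ⟨b, ha.2 hbα, h b hbα hba, fun c hc => ?_⟩
      by_cases hca : c = a
      · simp [hca]
      · simp [Finset.card_le_one.1 hone c (Finset.mem_erase.2 ⟨hca, hc⟩) b hb]
  exact (hP.lt_distortion_pair hab hlt).trans_le (hP.distortion_anti ⟨a, ha.1⟩ hsub)

theorem lt_distortion_of_one_lt_add (hP : SelfSimilar P) (ha : IsLeast (α : Set ℝ) a)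
    (ha4 : 1 / 4 < a) (h : ∀ b ∈ α, b ≠ a → 1 < a + b) : 55 / 9792 < distortion P α := by
  have hleft := hP.le_integral_infDist_sq_of_quarter_lt ha ha4
  rw [hP.distortion_eq_add]
  rcases le_or_gt a (3 / 10) with ha3 | ha3
  · have hmid := hP.le_integral_infDist_sq (σ := [1, 0]) ⟨a, ha.1⟩ (c := 7 / 10)
      fun y hy c hc => by
        rw [J_one_zero] at hy
        by_cases hca : c = a
        · rw [hca]
          exact sq_sub_right_le_of_add_le (by linarith) (by linarith [hy.1])
        · have hc7 : 7 / 10 < c := by linarith [h c hc hca]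
          exact sq_sub_left_le_of_le_add hc7.le (by linarith [hy.2])
    rw [sw_one_zero, Sw_one_zero_two_thirds] at hmid
    have hright : 0 ≤ ∫ x, Metric.infDist (Sw [1, 1] x) α ^ 2 ∂P :=
      integral_nonneg fun x => sq_nonneg _
    have hsplit := hP.integral_comp_Sw_eq (continuous_infDist_sq α) [1]
    simp only [List.cons_append, List.nil_append] at hsplit
    have hsq : (1 / 12) ^ 2 ≤ (1 / 6 - a) ^ 2 := by nlinarith
    linarith
  · have hright : 0 ≤ ∫ x, Metric.infDist (Sw [1] x) α ^ 2 ∂P :=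
      integral_nonneg fun x => sq_nonneg _
    have hsq : (2 / 15) ^ 2 ≤ (1 / 6 - a) ^ 2 := by nlinarith
    linarith

theorem lt_distortion_of_forall_lt_half (hP : SelfSimilar P) (hα : α.Nonempty)
    (h : ∀ a ∈ α, a < 1 / 2) : 13 / 612 < distortion P α := by
  have hright := hP.le_integral_infDist_sq (σ := [1]) (s := (α : Set ℝ)) (c := 1 / 2)
    (by simpa using hα) fun y hy a ha => by
      rw [J_one] at hy
      exact sq_sub_right_le_of_add_le (h a ha).le (by linarith [hy.1, h a ha])
  rw [sw_one, Sw_one_two_thirds] at hright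
  have hleft : 0 ≤ ∫ x, Metric.infDist (Sw [0] x) α ^ 2 ∂P :=
    integral_nonneg fun x => sq_nonneg _
  rw [hP.distortion_eq_add]
  linarith

theorem distortion_triple_le (hP : SelfSimilar P) :
    distortion P {1 / 6, 7 / 12, 11 / 12} ≤ 55 / 9792 := by
  have h0 := hP.integral_infDist_sq_le_of_mem (a := 1 / 6)
    (s := ({1 / 6, 7 / 12, 11 / 12} : Finset ℝ)) (by simp) [0]
  have h10 := hP.integral_infDist_sq_le_of_mem (a := 7 / 12)
    (s := ({1 / 6, 7 / 12, 11 / 12} : Finset ℝ)) (by simp) [1, 0]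
  have h11 := hP.integral_infDist_sq_le_of_mem (a := 11 / 12)
    (s := ({1 / 6, 7 / 12, 11 / 12} : Finset ℝ)) (by simp) [1, 1]
  have hsplit := hP.integral_comp_Sw_eq
    (continuous_infDist_sq ({1 / 6, 7 / 12, 11 / 12} : Finset ℝ)) [1]
  simp only [List.cons_append, List.nil_append] at hsplit
  rw [hP.distortion_eq_add, hsplit]
  rw [sw_zero, Sw_zero_two_thirds] at h0
  rw [sw_one_zero, Sw_one_zero_two_thirds] at h10
  rw [sw_one_one, Sw_one_one_two_thirds] at h11
  linarith

end SelfSimilar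

namespace IsOptimal

variable {P : Measure ℝ} {n : ℕ} {α β : Finset ℝ}

theorem distortion_le (hα : IsOptimal P n α) (hβ : β.Nonempty) (hcard : β.card ≤ n) :
    distortion P α ≤ distortion P β := by
  rw [hα.2.2]
  refine csInf_le ⟨0, ?_⟩ ⟨β, hβ, hcard, rfl⟩
  rintro _ ⟨γ, -, -, rfl⟩
  exact distortion_nonneg P γ

theorem mem_of_ae_infDist_le [IsFiniteMeasure P] {x : ℝ} (hP : SelfSimilar P) (hα : IsOptimal P n α)
    (hcard : β.card ≤ n) (hle : ∀ᵐ y ∂P, Metric.infDist y β ≤ Metric.infDist y α)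
    (hx : x ∈ P.support) (hxβ : x ∈ β) : x ∈ α := by
  have hint : ∀ s : Set ℝ, Integrable (fun y => Metric.infDist y s ^ 2) P := fun s =>
    hP.integrable_of_continuous (continuous_infDist_sq s)
  have hle_sq : (fun y => Metric.infDist y β ^ 2) ≤ᵐ[P] fun y => Metric.infDist y α ^ 2 :=
    hle.mono fun y hy => pow_le_pow_left₀ Metric.infDist_nonneg hy 2
  have hopt := hα.distortion_le ⟨x, hxβ⟩ hcard
  simp only [distortion_eq_integral_infDist_sq] at hopt
  have heq : ∀ᵐ y ∂P, Metric.infDist y β ^ 2 = Metric.infDist y α ^ 2 :=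
    (integral_eq_iff_of_ae_le (hint β) (hint α) hle_sq).1 <|
      (integral_mono_ae (hint β) (hint α) hle_sq).antisymm hopt
  have hx_eq : Metric.infDist x β ^ 2 = Metric.infDist x α ^ 2 :=
    Measure.support_subset_of_isClosed
      (isClosed_eq (continuous_infDist_sq β) (continuous_infDist_sq α)) heq hx
  rw [Metric.infDist_zero_of_mem (Finset.mem_coe.2 hxβ), zero_pow two_ne_zero] at hx_eq
  rw [← Finset.mem_coe, α.finite_toSet.isClosed.mem_iff_infDist_zero (by simpa using hα.1)]
  exact pow_eq_zero_iff two_ne_zero |>.1 hx_eq.symm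

theorem projIcc_mem [IsFiniteMeasure P] {a : ℝ} (hP : SelfSimilar P) (hα : IsOptimal P n α)
    (ha : a ∈ α) (hsupp : (projIcc 0 1 zero_le_one a : ℝ) ∈ P.support) :
    (projIcc 0 1 zero_le_one a : ℝ) ∈ α := by
  refine hα.mem_of_ae_infDist_le hP
    (β := α.image fun c => (projIcc 0 1 zero_le_one c : ℝ)) (Finset.card_image_le.trans hα.2.1) ?_
    hsupp (Finset.mem_image_of_mem _ ha)
  filter_upwards [hP.ae_mem_Icc] with x hx
  refine (Metric.le_infDist (by simpa using hα.1)).2 fun {c} hc => ?_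
  exact (Metric.infDist_le_dist_of_mem (Finset.mem_coe.2 (Finset.mem_image_of_mem _ hc))).trans
    (abs_sub_projIcc_le zero_le_one hx c)

variable [IsProbabilityMeasure P]

theorem zero_mem_of_nonpos {a : ℝ} (hP : SelfSimilar P) (hα : IsOptimal P n α) (ha : a ∈ α)
    (ha0 : a ≤ 0) : (0 : ℝ) ∈ α := by
  have hproj : (projIcc 0 1 zero_le_one a : ℝ) = 0 := by
    rw [projIcc_of_le_left _ ha0]
  have hsupp := hP.zero_mem_support (IsProbabilityMeasure.ne_zero P)
  simpa only [hproj] using hα.projIcc_mem hP ha (by rwa [hproj])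

theorem one_mem_of_one_le {a : ℝ} (hP : SelfSimilar P) (hα : IsOptimal P n α) (ha : a ∈ α)
    (ha1 : 1 ≤ a) : (1 : ℝ) ∈ α := by
  have hproj : (projIcc 0 1 zero_le_one a : ℝ) = 1 := by
    rw [projIcc_of_right_le _ ha1]
  have hsupp := hP.one_mem_support (IsProbabilityMeasure.ne_zero P)
  simpa only [hproj] using hα.projIcc_mem hP ha (by rwa [hproj])

theorem one_lt_add {a b : ℝ} (hP : SelfSimilar P) (hα : IsOptimal P n α)
    (ha : IsLeast (α : Set ℝ) a) (ha4 : 1 / 4 < a) (hb : b ∈ α) (hba : b ≠ a) : 1 < a + b := by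
  by_contra! hab
  refine (hP.distortion_insert_erase_lt ha ha4 hb hba hab).not_ge
    (hα.distortion_le (Finset.insert_nonempty _ _) ?_)
  calc (insert (1 / 6) (α.erase a)).card ≤ (α.erase a).card + 1 := Finset.card_insert_le _ _
    _ = α.card := Finset.card_erase_add_one ha.1
    _ ≤ n := hα.2.1

theorem distortion_le_of_two_le (hP : SelfSimilar P) (hn : 2 ≤ n) (hα : IsOptimal P n α) :
    distortion P α ≤ 13 / 612 := by
  rw [← hP.distortion_one_sixth_five_sixths]
  exact hα.distortion_le (Finset.insert_nonempty _ _) (Finset.card_le_two.trans hn)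

theorem distortion_le_of_three_le (hP : SelfSimilar P) (hn : 3 ≤ n) (hα : IsOptimal P n α) :
    distortion P α ≤ 55 / 9792 :=
  (hα.distortion_le (Finset.insert_nonempty _ _) (Finset.card_le_three.trans hn)).trans
    hP.distortion_triple_le

theorem exists_le_quarter (hP : SelfSimilar P) (hn : 2 ≤ n) (hα : IsOptimal P n α) :
    ∃ a ∈ α, a ≤ 1 / 4 := by
  by_contra! hright
  have hleast := α.isLeast_min' hα.1
  set a := α.min' hα.1
  have ha4 : 1 / 4 < a := hright a hleast.1
  have hadd : ∀ b ∈ α, b ≠ a → 1 < a + b := fun b hb hba => hα.one_lt_add hP hleast ha4 hb hba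
  rcases hn.eq_or_lt with rfl | hn3
  · exact (hP.lt_distortion_of_card_le_two hα.2.1 hleast hadd).not_ge
      (hα.distortion_le_of_two_le hP le_rfl)
  · exact (hP.lt_distortion_of_one_lt_add hleast ha4 hadd).not_ge
      (hα.distortion_le_of_three_le hP hn3)

theorem exists_half_le (hP : SelfSimilar P) (hn : 2 ≤ n) (hα : IsOptimal P n α) :
    ∃ a ∈ α, 1 / 2 ≤ a := by
  by_contra! hleft
  exact (hP.lt_distortion_of_forall_lt_half hα.1 hleft).not_ge (hα.distortion_le_of_two_le hP hn)

end IsOptimal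

theorem stmt_11 (P : Measure ℝ) [IsProbabilityMeasure P] (hP : SelfSimilar P)
    (n : ℕ) (hn : 2 ≤ n) (α : Finset ℝ) (hα : IsOptimal P n α) :
    ((α : Set ℝ) ∩ J [0]).Nonempty ∧ ((α : Set ℝ) ∩ J [1]).Nonempty := by
  obtain ⟨a, ha, ha4⟩ := hα.exists_le_quarter hP hn
  obtain ⟨b, hb, hb2⟩ := hα.exists_half_le hP hn
  rw [J_zero, J_one]
  constructor
  · rcases le_total a 0 with ha0 | ha0
    · exact ⟨0, hα.zero_mem_of_nonpos hP ha ha0, by norm_num⟩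
    · exact ⟨a, ha, ha0, ha4⟩
  · rcases le_total 1 b with hb1 | hb1
    · exact ⟨1, hα.one_mem_of_one_le hP hb hb1, by norm_num⟩
    · exact ⟨b, hb, hb2, hb1⟩
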